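/- Let K₁ be a field and let K₁ ⊇ K₂ ⊇ K₃ ⊇ ⋯ be a decreasing sequence of subfields of K₁; set K_∞ := ⋂_{n≥1} K_n and assume that K_∞ is a PAC field. Let φ(x₁, …, x_m) be a quantifier-free formula in the first-order language of rings with parameters from K_∞. If for every n ≥ 1 there exists a tuple a ∈ K_n^m such that φ(a) holds in the field K_n, then there exists a tuple b ∈ K_∞^m such that φ(b) holds in the field K_∞. -/

import Mathlib

universe u

/-- A field `F` is pseudo-algebraically closed (PAC) if every finitely generated commutative
`F`-algebra `A` such that `A ⊗[F] F̄` is an integral domain admits an `F`-algebra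
homomorphism to `F`. -/
def IsPAC (F : Type u) [Field F] : Prop :=
  ∀ (A : Type u) [CommRing A] [Algebra F A], Algebra.FiniteType F A →
    IsDomain (TensorProduct F A (AlgebraicClosure F)) → Nonempty (A →ₐ[F] F)

section FieldIntersection

variable {K E : Type*} [Field K] [Field E] [Algebra K E] {F : ℕ → Subfield E}

/-- If `K` is the intersection of a decreasing sequence of subfields `F n` of `E`, then a finite
subfamily of a `K`-linearly independent family in an `E`-vector space is linearly independent over
some `F n`. -/
theorem LinearIndependent.exists_subfield_of_antitone {M ι : Type*} [AddCommGroup M] [Module E M]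
    [Module K M] [IsScalarTower K E M] (hF : Antitone F)
    (hK : ∀ x : E, (∀ n, x ∈ F n) → ∃ k : K, algebraMap K E k = x)
    {v : ι → M} (hv : LinearIndependent K v) (s : Finset ι) :
    ∃ n, ∀ x : ι → E, (∀ i ∈ s, x i ∈ F n) → ∑ i ∈ s, x i • v i = 0 → ∀ i ∈ s, x i = 0 := by
  classical
  induction s using Finset.induction_on with
  | empty => exact ⟨0, by simp⟩
  | insert j s hj ih =>
    obtain ⟨N, hN⟩ := ih
    by_contra! hcon
    have hrel : ∀ n, ∃ x : ι → E, (∀ i ∈ s, x i ∈ F (max n N)) ∧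
        v j + ∑ i ∈ s, x i • v i = 0 := by
      intro n
      obtain ⟨x, hxF, hx0, i, hi, hxi⟩ := hcon (max n N)
      rw [Finset.sum_insert hj] at hx0
      have hxj : x j ≠ 0 := by
        intro h
        rw [h, zero_smul, zero_add] at hx0
        have hs := hN x (fun i hi => hF (le_max_right n N)
          (hxF i (Finset.mem_insert_of_mem hi))) hx0
        rcases Finset.mem_insert.1 hi with rfl | hi
        · exact hxi h
        · exact hxi (hs i hi)
      refine ⟨fun i => (x j)⁻¹ * x i, fun i hi => mul_mem
        (inv_mem (hxF j (Finset.mem_insert_self j s))) (hxF i (Finset.mem_insert_of_mem hi)), ?_⟩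
      have := congrArg (fun y => (x j)⁻¹ • y) hx0
      simpa [smul_add, smul_smul, inv_mul_cancel₀ hxj, Finset.smul_sum] using this
    choose x hxF hx0 using hrel
    have heq : ∀ n, ∀ i ∈ s, x n i = x 0 i := by
      intro n i hi
      refine sub_eq_zero.1 (hN (fun i => x n i - x 0 i) (fun i hi => sub_mem
        (hF (le_max_right n N) (hxF n i hi)) (hF (le_max_right 0 N) (hxF 0 i hi))) ?_ i hi)
      simp only [sub_smul, Finset.sum_sub_distrib]
      exact sub_eq_zero.2 (add_left_cancel ((hx0 n).trans (hx0 0).symm))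
    have hmem : ∀ i : s, ∃ k : K, algebraMap K E k = x 0 i := fun i =>
      hK _ fun n => heq n i i.2 ▸ hF (le_max_left n N) (hxF n i i.2)
    choose k hk using hmem
    let c : ι → K := fun i => if h : i ∈ s then k ⟨i, h⟩ else 1
    have hc : ∑ i ∈ insert j s, c i • v i = 0 := by
      rw [Finset.sum_insert hj, ← hx0 0]
      congr 1
      · simp [c, hj]
      · refine Finset.sum_congr rfl fun i hi => ?_
        rw [← hk ⟨i, hi⟩, algebraMap_smul]
        simp [c, hi]
    have := linearIndependent_iff'.1 hv _ c hc j (Finset.mem_insert_self j s)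
    simp [c, hj] at this

open scoped TensorProduct in
/-- Let `K` be the intersection of a decreasing sequence of subfields `F n` of `E`. If the
`K`-algebra `B` has points in every `F n`, but no nonzero ideal of `B` vanishes at such points for
every `n`, then `B ⊗[K] Ω` is a domain for every algebraic field extension `Ω` of `K`. -/
theorem isDomain_tensorProduct_of_forall_subfield_point {B Ω : Type*} [CommRing B] [Algebra K B]
    [Field Ω] [Algebra K Ω] [Algebra.IsAlgebraic K Ω] (hF : Antitone F)
    (hK : ∀ x : E, (∀ n, x ∈ F n) → ∃ k : K, algebraMap K E k = x)
    (hB : ∀ n, ∃ f : B →ₐ[K] E, ∀ b, f b ∈ F n)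
    (hmin : ∀ I : Ideal B, (∀ n, ∃ f : B →ₐ[K] E, (∀ b, f b ∈ F n) ∧ ∀ b ∈ I, f b = 0) → I = ⊥) :
    IsDomain (B ⊗[K] Ω) := by
  classical
  let σ : Ω →ₐ[K] AlgebraicClosure E := IsAlgClosed.lift
  let e := Module.Basis.ofVectorSpace K Ω
  let eB := Algebra.TensorProduct.basis B e
  have hpoint (f : B →ₐ[K] E) (u : B ⊗[K] Ω) (s : Finset _) (hs : (eB.repr u).support ⊆ s) :
      Algebra.TensorProduct.productMap ((Algebra.ofId E (AlgebraicClosure E)).restrictScalars K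
        |>.comp f) σ u = ∑ i ∈ s, f (eB.repr u i) • σ (e i) := by
    conv_lhs => rw [← eB.linearCombination_repr u, Finsupp.linearCombination_apply,
      Finsupp.sum_of_support_subset _ hs _ (by simp), map_sum]
    refine Finset.sum_congr rfl fun i _ => ?_
    rw [Algebra.TensorProduct.basis_apply, TensorProduct.smul_tmul', smul_eq_mul, mul_one,
      Algebra.TensorProduct.productMap_apply_tmul, Algebra.smul_def]
    rfl
  have hli : LinearIndependent K (fun i => σ (e i)) :=
    e.linearIndependent.map' σ.toLinearMap (LinearMap.ker_eq_bot.2 σ.injective)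
  have : Nontrivial B := (hB 0).choose.toRingHom.domain_nontrivial
  have : NoZeroDivisors (B ⊗[K] Ω) := by
    refine ⟨fun {u w} huw => ?_⟩
    obtain ⟨N, hN⟩ := hli.exists_subfield_of_antitone hF hK
      ((eB.repr u).support ∪ (eB.repr w).support)
    let I (u : B ⊗[K] Ω) : Ideal B := Ideal.span (Set.range (eB.repr u))
    have hI0 (u : B ⊗[K] Ω) (h : I u = ⊥) : u = 0 := by
      rw [Ideal.span_eq_bot] at h
      refine eB.repr.map_eq_zero_iff.1 (Finsupp.ext fun i => h _ ⟨i, rfl⟩)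
    have hvan (f : B →ₐ[K] E) (hf : ∀ b, f b ∈ F N) (u' : B ⊗[K] Ω)
        (hs : (eB.repr u').support ⊆ (eB.repr u).support ∪ (eB.repr w).support)
        (h0 : Algebra.TensorProduct.productMap ((Algebra.ofId E
          (AlgebraicClosure E)).restrictScalars K |>.comp f) σ u' = 0) :
        ∀ b ∈ I u', f b = 0 := by
      rw [hpoint f u' _ hs] at h0
      have h := hN (fun i => f (eB.repr u' i)) (fun i _ => hf _) h0
      change I u' ≤ RingHom.ker f
      refine Ideal.span_le.2 ?_
      rintro _ ⟨i, rfl⟩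
      by_cases hi : i ∈ (eB.repr u').support
      · exact h i (hs hi)
      · simp [Finsupp.notMem_support_iff.1 hi]
    by_contra! hne
    have hu := mt (hI0 u) hne.1
    have hw := mt (hI0 w) hne.2
    replace hu := mt (hmin _) hu
    replace hw := mt (hmin _) hw
    push Not at hu hw
    obtain ⟨n₁, hn₁⟩ := hu
    obtain ⟨n₂, hn₂⟩ := hw
    obtain ⟨f, hf⟩ := hB (max N (max n₁ n₂))
    have hle {k} (hk : k ≤ max N (max n₁ n₂)) (b : B) : f b ∈ F k := hF hk (hf b)
    have hprod := congrArg (Algebra.TensorProduct.productMap ((Algebra.ofId E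
      (AlgebraicClosure E)).restrictScalars K |>.comp f) σ) huw
    rw [map_mul, map_zero, mul_eq_zero] at hprod
    rcases hprod with h | h
    · obtain ⟨b, hb, hb0⟩ := hn₁ f (hle (by simp))
      exact hb0 (hvan f (hle (by simp)) u Finset.subset_union_left h b hb)
    · obtain ⟨b, hb, hb0⟩ := hn₂ f (hle (by simp))
      exact hb0 (hvan f (hle (by simp)) w Finset.subset_union_right h b hb)
  exact NoZeroDivisors.to_isDomain _

end FieldIntersection

/-- If a PAC field `K` is the intersection of a decreasing sequence of subfields `F n` of `E`, then
a finitely generated `K`-algebra with points in every `F n` has a point in `K`. -/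
theorem IsPAC.nonempty_algHom_of_forall_subfield_point {K A : Type u} {E : Type*} [Field K]
    [Field E] [Algebra K E] {F : ℕ → Subfield E} (hPAC : IsPAC K) (hF : Antitone F)
    (hK : ∀ x : E, (∀ n, x ∈ F n) → ∃ k : K, algebraMap K E k = x)
    [CommRing A] [Algebra K A] [Algebra.FiniteType K A]
    (hA : ∀ n, ∃ f : A →ₐ[K] E, ∀ b, f b ∈ F n) : Nonempty (A →ₐ[K] K) := by
  have : IsNoetherianRing A := Algebra.FiniteType.isNoetherianRing K A
  obtain ⟨I, hI, hmax⟩ := set_has_maximal_iff_noetherian.2 this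
    {I : Ideal A | ∀ n, ∃ f : A →ₐ[K] E, (∀ b, f b ∈ F n) ∧ ∀ b ∈ I, f b = 0}
    ⟨⊥, fun n => by
      obtain ⟨f, hf⟩ := hA n
      exact ⟨f, hf, by simp⟩⟩
  have hdom : IsDomain (TensorProduct K (A ⧸ I) (AlgebraicClosure K)) := by
    refine isDomain_tensorProduct_of_forall_subfield_point hF hK (fun n => ?_) fun J hJ => ?_
    · obtain ⟨f, hf, hf0⟩ := hI n
      exact ⟨Ideal.Quotient.liftₐ I f hf0, fun b => by
        obtain ⟨b, rfl⟩ := Ideal.Quotient.mk_surjective b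
        exact hf b⟩
    · by_contra hne
      refine hmax (J.comap (Ideal.Quotient.mk I)) (fun n => ?_) (lt_of_le_of_ne ?_ ?_)
      · obtain ⟨f, hf, hf0⟩ := hJ n
        exact ⟨f.comp (Ideal.Quotient.mkₐ K I), fun b => hf _, fun b hb => hf0 _ hb⟩
      · exact fun b hb => by simp [Ideal.mem_comap, Ideal.Quotient.eq_zero_iff_mem.2 hb]
      · intro heq
        refine hne (eq_bot_iff.2 fun b hb => ?_)
        obtain ⟨b, rfl⟩ := Ideal.Quotient.mk_surjective b
        exact Ideal.Quotient.eq_zero_iff_mem.2 (heq ▸ hb)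
  obtain ⟨g⟩ := hPAC (A ⧸ I) inferInstance hdom
  exact ⟨g.comp (Ideal.Quotient.mkₐ K I)⟩

section RingFormula

open FirstOrder FirstOrder.Ring

variable {K σ : Type*} [CommRing K]

/-- A term in the language of rings with parameters in `K` is given by a polynomial over `K`. -/
theorem FirstOrder.Ring.exists_mvPolynomial_realize_eq (t : Language.ring.Term ((K ⊕ σ) ⊕ Fin 0)) :
    ∃ p : MvPolynomial σ K, ∀ (R : Type u) [CommRing R] [CompatibleRing R] (f : K →+* R)
      (a : σ → R) (x : Fin 0 → R), t.realize (Sum.elim (Sum.elim f a) x) = p.eval₂ f a := by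
  induction t with
  | var i =>
    rcases i with (k | i) | i
    · exact ⟨MvPolynomial.C k, by simp⟩
    · exact ⟨MvPolynomial.X i, by simp⟩
    · exact i.elim0
  | func g ts ih =>
    choose p hp using ih
    cases g with
    | add => exact ⟨p 0 + p 1, fun R _ _ f a x => by
        rw [MvPolynomial.eval₂_add, ← hp 0 R f a x, ← hp 1 R f a x]
        exact CompatibleRing.funMap_add _⟩
    | mul => exact ⟨p 0 * p 1, fun R _ _ f a x => by
        rw [MvPolynomial.eval₂_mul, ← hp 0 R f a x, ← hp 1 R f a x]
        exact CompatibleRing.funMap_mul _⟩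
    | neg => exact ⟨-p 0, fun R _ _ f a x => by
        rw [MvPolynomial.eval₂_neg, ← hp 0 R f a x]
        exact CompatibleRing.funMap_neg _⟩
    | zero => exact ⟨0, fun R _ _ f a x => by
        rw [MvPolynomial.eval₂_zero]
        exact CompatibleRing.funMap_zero _⟩
    | one => exact ⟨1, fun R _ _ f a x => by
        rw [MvPolynomial.eval₂_one]
        exact CompatibleRing.funMap_one _⟩

/-- The truth of a quantifier-free formula in the language of rings with parameters in `K` is
determined by the vanishing of finitely many polynomials over `K`. -/
theorem FirstOrder.Language.BoundedFormula.IsQF.exists_finset_mvPolynomial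
    {φ : Language.ring.Formula (K ⊕ σ)} (hφ : φ.IsQF) :
    ∃ S : Finset (MvPolynomial σ K), ∀ (R R' : Type u) [CommRing R] [CompatibleRing R]
      [CommRing R'] [CompatibleRing R'] (f : K →+* R) (f' : K →+* R') (a : σ → R) (a' : σ → R'),
      (∀ p ∈ S, p.eval₂ f a = 0 ↔ p.eval₂ f' a' = 0) →
      (φ.Realize (Sum.elim f a) ↔ φ.Realize (Sum.elim f' a')) := by
  classical
  induction hφ with
  | falsum => exact ⟨∅, fun R R' _ _ _ _ f f' a a' _ => Iff.rfl⟩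
  | of_isAtomic h =>
    cases h with
    | equal t₁ t₂ =>
      obtain ⟨p₁, hp₁⟩ := exists_mvPolynomial_realize_eq.{u} t₁
      obtain ⟨p₂, hp₂⟩ := exists_mvPolynomial_realize_eq.{u} t₂
      refine ⟨{p₁ - p₂}, fun R R' _ _ _ _ f f' a a' h => ?_⟩
      simpa [Formula.Realize, hp₁, hp₂, sub_eq_zero, MvPolynomial.eval₂_sub] using h
    | rel r ts => exact isEmptyElim r
  | imp _ _ ih₁ ih₂ =>
    obtain ⟨S₁, h₁⟩ := ih₁
    obtain ⟨S₂, h₂⟩ := ih₂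
    refine ⟨S₁ ∪ S₂, fun R R' _ _ _ _ f f' a a' h => ?_⟩
    have e₁ := h₁ R R' f f' a a' fun p hp => h p (Finset.mem_union_left _ hp)
    have e₂ := h₂ R R' f f' a a' fun p hp => h p (Finset.mem_union_right _ hp)
    simp only [Formula.Realize, BoundedFormula.realize_imp] at e₁ e₂ ⊢
    rw [e₁, e₂]

end RingFormula

/-- If a PAC field `K` is the intersection of a decreasing sequence of subfields `F n` of `E`, then
any finite system of polynomial equations and inequations over `K` with solutions in every `F n`
has a solution in `K`. -/
theorem IsPAC.exists_aeval_eq_zero_and_ne_zero {K : Type u} {σ : Type} {E : Type*} [Finite σ]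
    [Field K] [Field E] [Algebra K E] {F : ℕ → Subfield E} (hPAC : IsPAC K) (hF : Antitone F)
    (hK : ∀ x : E, (∀ n, x ∈ F n) → ∃ k : K, algebraMap K E k = x)
    (hKF : ∀ n (k : K), algebraMap K E k ∈ F n) (T U : Finset (MvPolynomial σ K))
    (h : ∀ n, ∃ a : σ → E, (∀ i, a i ∈ F n) ∧ (∀ p ∈ T, MvPolynomial.aeval a p = 0) ∧
      ∀ p ∈ U, MvPolynomial.aeval a p ≠ 0) :
    ∃ b : σ → K, (∀ p ∈ T, MvPolynomial.aeval b p = 0) ∧ ∀ p ∈ U, MvPolynomial.aeval b p ≠ 0 := by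
  let r : MvPolynomial σ K →ₐ[K] MvPolynomial (Option σ) K := MvPolynomial.rename some
  let I : Ideal (MvPolynomial (Option σ) K) :=
    Ideal.span (insert (MvPolynomial.X none * r (∏ p ∈ U, p) - 1) (r '' T))
  have hmem {L : Subfield E} (hL : ∀ k : K, algebraMap K E k ∈ L) {τ : Type} {c : τ → E}
      (hc : ∀ i, c i ∈ L) (p : MvPolynomial τ K) : MvPolynomial.aeval c p ∈ L :=
    MvPolynomial.eval₂_mem (fun i _ => hL _) hc
  obtain ⟨g⟩ := hPAC.nonempty_algHom_of_forall_subfield_point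
    (A := MvPolynomial (Option σ) K ⧸ I) hF hK fun n => by
    obtain ⟨a, ha, hT, hU⟩ := h n
    let c : Option σ → E := fun i => i.elim (MvPolynomial.aeval a (∏ p ∈ U, p))⁻¹ a
    have hr (p : MvPolynomial σ K) : MvPolynomial.aeval c (r p) = MvPolynomial.aeval a p := by
      rw [MvPolynomial.aeval_rename]
      rfl
    have hne : MvPolynomial.aeval a (∏ p ∈ U, p) ≠ 0 := by
      rw [map_prod]
      exact Finset.prod_ne_zero_iff.2 hU
    have hI : I ≤ RingHom.ker (MvPolynomial.aeval (R := K) c) := by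
      refine Ideal.span_le.2 (Set.insert_subset ?_ ?_)
      · simp only [SetLike.mem_coe, RingHom.mem_ker, map_sub, map_mul, hr, MvPolynomial.aeval_X,
          map_one]
        exact sub_eq_zero.2 (inv_mul_cancel₀ hne)
      · rintro _ ⟨p, hp, rfl⟩
        exact (hr p).trans (hT p hp)
    refine ⟨Ideal.Quotient.liftₐ I (MvPolynomial.aeval c) hI, fun b => ?_⟩
    obtain ⟨b, rfl⟩ := Ideal.Quotient.mk_surjective b
    refine hmem (hKF n) (c := c) (fun i => ?_) b
    cases i with
    | none => exact inv_mem (hmem (hKF n) ha _)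
    | some i => exact ha i
  let g' := (g.comp (Ideal.Quotient.mkₐ K I)).comp r
  have hg : g' = MvPolynomial.aeval (fun i => g' (MvPolynomial.X i)) :=
    MvPolynomial.aeval_unique g'
  have hker {p} (hp : p ∈ I) : g (Ideal.Quotient.mkₐ K I p) = 0 := by
    rw [Ideal.Quotient.mkₐ_eq_mk, Ideal.Quotient.eq_zero_iff_mem.2 hp, map_zero]
  refine ⟨fun i => g' (MvPolynomial.X i), ?_⟩
  rw [← hg]
  refine ⟨fun p hp => hker (Ideal.subset_span (Set.mem_insert_of_mem _ ⟨p, hp, rfl⟩)), ?_⟩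
  have h1 := hker (Ideal.subset_span (Set.mem_insert _ _))
  rw [map_sub, map_sub, map_mul, map_mul, map_one, map_one, sub_eq_zero] at h1
  have hprod : g' (∏ p ∈ U, p) ≠ 0 := right_ne_zero_of_mul_eq_one h1
  rw [map_prod] at hprod
  exact Finset.prod_ne_zero_iff.1 hprod

/-- Let `K₁ ⊇ K₂ ⊇ K₃ ⊇ ⋯` be a decreasing sequence of subfields of a field `K₁` whose
intersection `K_∞` is PAC. If a quantifier-free formula `φ` in the language of rings with
parameters from `K_∞` is satisfiable in every `K_n`, then it is satisfiable in `K_∞`. -/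
theorem qf_formula_realized_in_intersection_of_PAC
    (K1 : Type u) [Field K1] (F : ℕ → Subfield K1)
    (hdec : ∀ m n : ℕ, m ≤ n → F n ≤ F m)
    (hPAC : IsPAC ↥(⨅ n : ℕ, F n))
    (m : ℕ)
    (φ : FirstOrder.Language.ring.Formula (↥(⨅ n : ℕ, F n) ⊕ Fin m))
    (hqf : φ.IsQF) :
    (∀ n : ℕ,
        letI := FirstOrder.Ring.compatibleRingOfRing ↥(F n)
        ∃ a : Fin m → ↥(F n),
          φ.Realize (Sum.elim (fun c => Subfield.inclusion (iInf_le F n) c) a)) →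
    letI := FirstOrder.Ring.compatibleRingOfRing ↥(⨅ n : ℕ, F n)
    ∃ b : Fin m → ↥(⨅ n : ℕ, F n), φ.Realize (Sum.elim id b) := by
  classical
  intro h
  let := FirstOrder.Ring.compatibleRingOfRing ↥(⨅ n : ℕ, F n)
  obtain ⟨S, hS⟩ := hqf.exists_finset_mvPolynomial
  choose a ha using h
  let c (n : ℕ) (i : Fin m) : K1 := a n i
  have hac (n : ℕ) (p : MvPolynomial (Fin m) ↥(⨅ n : ℕ, F n)) :
      p.eval₂ (Subfield.inclusion (iInf_le F n)) (a n) = 0 ↔ MvPolynomial.aeval (c n) p = 0 := by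
    rw [← map_eq_zero_iff (F n).subtype (F n).subtype_injective, MvPolynomial.eval₂_comp_left]
    rfl
  let V (n : ℕ) : S.powerset := ⟨S.filter fun p => MvPolynomial.aeval (c n) p = 0,
    Finset.mem_powerset.2 (Finset.filter_subset _ _)⟩
  obtain ⟨T, hT⟩ := Finite.exists_infinite_fiber V
  rw [Set.infinite_coe_iff] at hT
  have hTn {n : ℕ} (hn : V n = T) {p} (hp : p ∈ S) :
      MvPolynomial.aeval (c n) p = 0 ↔ p ∈ T.1 := by
    simp [← hn, V, hp]
  have hTS : T.1 ⊆ S := Finset.mem_powerset.1 T.2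
  obtain ⟨b, hbT, hbU⟩ := hPAC.exists_aeval_eq_zero_and_ne_zero (fun m n => hdec m n)
    (fun x hx => ⟨⟨x, Subfield.mem_iInf.2 hx⟩, rfl⟩) (fun n k => Subfield.mem_iInf.1 k.2 n)
    T.1 (S \ T.1) fun n => by
      obtain ⟨k, hk, hnk⟩ := hT.exists_gt n
      refine ⟨c k, fun i => hdec n k hnk.le (a k i).2, fun p hp => (hTn hk (hTS hp)).2 hp,
        fun p hp => ?_⟩
      rw [Finset.mem_sdiff] at hp
      exact mt (hTn hk hp.1).1 hp.2
  obtain ⟨n, hn⟩ := hT.nonempty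
  let := FirstOrder.Ring.compatibleRingOfRing ↥(F n)
  refine ⟨b, (hS _ _ (Subfield.inclusion (iInf_le F n)) (RingHom.id _) (a n) b
    fun p hp => ?_).1 (ha n)⟩
  rw [hac, hTn hn hp]
  by_cases hpT : p ∈ T.1
  · exact iff_of_true hpT (hbT p hpT)
  · exact iff_of_false hpT (hbU p (Finset.mem_sdiff.2 ⟨hp, hpT⟩))
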